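/- For every n, the number of board-minimal 132-avoiding full rook placements on Ferrers boards in F_n equals the number of 1324-avoiding permutations of [n]. -/

import Mathlib

/-! ### Patterns of length 3 and 4 as permutations (0-indexed values) -/

def p123 : Equiv.Perm (Fin 3) :=
  ⟨![0,1,2], ![0,1,2], by intro x; fin_cases x <;> rfl, by intro x; fin_cases x <;> rfl⟩
def p132 : Equiv.Perm (Fin 3) :=
  ⟨![0,2,1], ![0,2,1], by intro x; fin_cases x <;> rfl, by intro x; fin_cases x <;> rfl⟩
def p213 : Equiv.Perm (Fin 3) :=
  ⟨![1,0,2], ![1,0,2], by intro x; fin_cases x <;> rfl, by intro x; fin_cases x <;> rfl⟩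
def p231 : Equiv.Perm (Fin 3) :=
  ⟨![1,2,0], ![2,0,1], by intro x; fin_cases x <;> rfl, by intro x; fin_cases x <;> rfl⟩
def p312 : Equiv.Perm (Fin 3) :=
  ⟨![2,0,1], ![1,2,0], by intro x; fin_cases x <;> rfl, by intro x; fin_cases x <;> rfl⟩
def p321 : Equiv.Perm (Fin 3) :=
  ⟨![2,1,0], ![2,1,0], by intro x; fin_cases x <;> rfl, by intro x; fin_cases x <;> rfl⟩
def p1342 : Equiv.Perm (Fin 4) :=
  ⟨![0,2,3,1], ![0,3,1,2], by intro x; fin_cases x <;> rfl, by intro x; fin_cases x <;> rfl⟩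
def p1324 : Equiv.Perm (Fin 4) :=
  ⟨![0,2,1,3], ![0,2,1,3], by intro x; fin_cases x <;> rfl, by intro x; fin_cases x <;> rfl⟩

/-! ### Perfect matchings of `[2n] = {1, …, 2n}` as finsets of pairs `(i,j)`, `i < j` -/

/-- `M` is a perfect matching of `{1, …, 2n}`. -/
def IsPerfectMatching (n : ℕ) (M : Finset (ℕ × ℕ)) : Prop :=
  (∀ p ∈ M, p.1 < p.2 ∧ 1 ≤ p.1 ∧ p.2 ≤ 2 * n) ∧
  ∀ x, 1 ≤ x → x ≤ 2 * n → ∃! p, p ∈ M ∧ (p.1 = x ∨ p.2 = x)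

/-- The matching `M` contains the pattern `τ ∈ S_k`: there are
`i_1 < i_2 < ⋯ < i_{2k}` with `(i_a, i_{2k+1-τ(a)}) ∈ M` for all `1 ≤ a ≤ k`
(written here 0-indexed). -/
def MatchContains {k : ℕ} (τ : Equiv.Perm (Fin k)) (M : Finset (ℕ × ℕ)) : Prop :=
  ∃ f : Fin (2 * k) → ℕ, StrictMono f ∧
    ∀ a : Fin k,
      (f ⟨a.1, by have := a.isLt; omega⟩,
       f ⟨2 * k - 1 - (τ a).1, by have := (τ a).isLt; omega⟩) ∈ M

def MatchAvoids {k : ℕ} (τ : Equiv.Perm (Fin k)) (M : Finset (ℕ × ℕ)) : Prop :=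
  ¬ MatchContains τ M

/-! ### Dyck paths as lists of booleans (`true` = east step, `false` = south step) -/

/-- A Dyck path of semilength `n`, from `(0,n)` to `(n,0)`, staying weakly above `y = n - x`. -/
def IsDyckPath (n : ℕ) (t : List Bool) : Prop :=
  t.length = 2 * n ∧ t.count true = n ∧
  ∀ i, (t.take i).count false ≤ (t.take i).count true

/-- The height (distance above the diagonal) of the `i`-th vertex of the path `t`. -/
def pathHeight (t : List Bool) (i : ℕ) : ℤ :=
  ((t.take i).count true : ℤ) - ((t.take i).count false : ℤ)

/-- `s` lies weakly below `t` (for paths of the same semilength). -/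
def WeaklyBelow (s t : List Bool) : Prop := ∀ i, pathHeight s i ≤ pathHeight t i

/-- The shape of a matching of `[2n]`: an east step for each opener, a south step for
each closer. -/
def shapeOf (n : ℕ) (M : Finset (ℕ × ℕ)) : List Bool :=
  (List.range (2 * n)).map fun x => decide ((x + 1) ∈ M.image Prod.fst)

/-- Number of returns of a path: south steps ending on the diagonal. -/
def returnsOf (t : List Bool) : ℕ :=
  ((Finset.range t.length).filter fun i =>
    t[i]? = some false ∧ (t.take (i+1)).count true = (t.take (i+1)).count false).card

/-- Height sequence of a path, as natural numbers. -/
def hseq (t : List Bool) (i : ℕ) : ℕ := (t.take i).count true - (t.take i).count false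

/-- `η(F)`: the number of indices `0 ≤ i ≤ 2n` with `h_i = 2`. -/
def etaOf (n : ℕ) (t : List Bool) : ℕ :=
  ((Finset.range (2 * n + 1)).filter fun i => hseq t i = 2).card

/-! ### Full rook placements on Ferrers boards -/

/-- The square in column `c`, row `r` (both 1-indexed from the bottom left) belongs to the
Ferrers board with border path `t ∈ F_n`. -/
def InBoard (n : ℕ) (t : List Bool) (c r : ℕ) : Prop :=
  1 ≤ c ∧ 1 ≤ r ∧ ∃ i, c ≤ (t.take i).count true ∧ (t.take i).count false + r ≤ n

/-- `R` is a full rook placement on the Ferrers board with border path `t ∈ F_n`: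
one rook in each of the `n` rows and `n` columns. -/
def IsFullRookPlacement (n : ℕ) (t : List Bool) (R : Finset (ℕ × ℕ)) : Prop :=
  (∀ p ∈ R, InBoard n t p.1 p.2) ∧
  (∀ c, 1 ≤ c → c ≤ n → ∃! p, p ∈ R ∧ p.1 = c) ∧
  (∀ r, 1 ≤ r → r ≤ n → ∃! p, p ∈ R ∧ p.2 = r)

/-- The rooks of `R` lying in the rectangle `Γ(V_i)` determined by the `i`-th border vertex. -/
def rectRooks (n : ℕ) (t : List Bool) (R : Finset (ℕ × ℕ)) (i : ℕ) : Finset (ℕ × ℕ) :=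
  R.filter fun p => p.1 ≤ (t.take i).count true ∧ p.2 + (t.take i).count false ≤ n

/-- Length of the longest increasing sequence (in both coordinates) in a finite point set. -/
def lisLen (S : Finset (ℕ × ℕ)) : ℕ :=
  (S.powerset.filter fun T => ∀ p ∈ T, ∀ q ∈ T, p.1 < q.1 → p.2 < q.2).sup Finset.card

/-- The full rook placement `R` on the board with border `t ∈ F_n` contains the pattern `τ`:
some rectangle `Γ(V_i)` contains an occurrence of `τ`. -/
def PlacementContains {k : ℕ} (τ : Equiv.Perm (Fin k)) (n : ℕ) (t : List Bool)
    (R : Finset (ℕ × ℕ)) : Prop :=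
  ∃ i ≤ 2 * n, ∃ f : Fin k → ℕ × ℕ,
    (∀ a, f a ∈ R ∧ (f a).1 ≤ (t.take i).count true ∧ (f a).2 + (t.take i).count false ≤ n) ∧
    (∀ a b : Fin k, a < b → (f a).1 < (f b).1) ∧
    (∀ a b : Fin k, τ a < τ b → (f a).2 < (f b).2)

def PlacementAvoids {k : ℕ} (τ : Equiv.Perm (Fin k)) (n : ℕ) (t : List Bool)
    (R : Finset (ℕ × ℕ)) : Prop :=
  ¬ PlacementContains τ n t R

/-- `R` is board-minimal on the board with border `t`: every peak corner square holds a rook. -/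
def BoardMinimal (n : ℕ) (t : List Bool) (R : Finset (ℕ × ℕ)) : Prop :=
  ∀ i, t[i]? = some true → t[i+1]? = some false →
    ((t.take (i+1)).count true, n - (t.take (i+1)).count false) ∈ R

/-- Board-minimal full rook placements on boards of `F_n` avoiding the pattern `σ`,
recorded as pairs (border path, rook set). -/
def MinPlacements (n : ℕ) {k : ℕ} (σ : Equiv.Perm (Fin k)) :
    Set (List Bool × Finset (ℕ × ℕ)) :=
  {tR | IsDyckPath n tR.1 ∧ IsFullRookPlacement n tR.1 tR.2 ∧ BoardMinimal n tR.1 tR.2 ∧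
        PlacementAvoids σ n tR.1 tR.2}

/-! ### Pattern avoidance in permutations -/

def PermContains {n k : ℕ} (τ : Equiv.Perm (Fin k)) (π : Equiv.Perm (Fin n)) : Prop :=
  ∃ f : Fin k → Fin n, StrictMono f ∧ ∀ a b : Fin k, τ a < τ b → π (f a) < π (f b)

def PermAvoids {n k : ℕ} (τ : Equiv.Perm (Fin k)) (π : Equiv.Perm (Fin n)) : Prop :=
  ¬ PermContains τ π

/-- The full rook placement associated to a permutation of `[n]`. -/
def permPlacement {n : ℕ} (π : Equiv.Perm (Fin n)) : Finset (ℕ × ℕ) :=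
  Finset.univ.image fun i : Fin n => ((i : ℕ) + 1, (π i : ℕ) + 1)

/-! ### Matchings with fixed points -/

/-- A (not necessarily perfect) matching on `{1, …, m}`: pairwise disjoint pairs. -/
def IsPartialMatching (m : ℕ) (M : Finset (ℕ × ℕ)) : Prop :=
  (∀ p ∈ M, p.1 < p.2 ∧ 1 ≤ p.1 ∧ p.2 ≤ m) ∧
  ∀ p ∈ M, ∀ q ∈ M, p ≠ q → p.1 ≠ q.1 ∧ p.1 ≠ q.2 ∧ p.2 ≠ q.1 ∧ p.2 ≠ q.2

/-- The fixed points (unmatched vertices) of a matching on `{1, …, m}`. -/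
def fixedPts (m : ℕ) (M : Finset (ℕ × ℕ)) : Finset ℕ :=
  (Finset.Icc 1 m).filter fun x => ∀ p ∈ M, p.1 ≠ x ∧ p.2 ≠ x

/-- The matched vertices of a matching on `{1, …, m}`. -/
def matchedSet (m : ℕ) (M : Finset (ℕ × ℕ)) : Finset ℕ :=
  (Finset.Icc 1 m).filter fun x => ∃ p ∈ M, p.1 = x ∨ p.2 = x

/-- The rank (1-based) of `x` inside the finset `S`. -/
def rankIn (S : Finset ℕ) (x : ℕ) : ℕ := (S.filter (· ≤ x)).card

/-- The matching obtained by removing the fixed points and relabeling increasingly. -/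
def relabeled (m : ℕ) (M : Finset (ℕ × ℕ)) : Finset (ℕ × ℕ) :=
  M.image fun p => (rankIn (matchedSet m M) p.1, rankIn (matchedSet m M) p.2)

/-! ### Set partitions -/

/-- `(i,j)` is an arc of the set partition `P` of `{1, …, n}`: `i < j` lie in a common block
with no element of that block strictly between them. -/
def PartArc {n : ℕ} (P : Finpartition (Finset.Icc 1 n)) (i j : ℕ) : Prop :=
  i < j ∧ ∃ B ∈ P.parts, i ∈ B ∧ j ∈ B ∧ ∀ x ∈ B, ¬(i < x ∧ x < j)

/-- The set partition `P` contains the pattern `τ ∈ S_k`. -/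
def PartContains {k n : ℕ} (τ : Equiv.Perm (Fin k)) (P : Finpartition (Finset.Icc 1 n)) : Prop :=
  ∃ f : Fin (2 * k) → ℕ, StrictMono f ∧
    ∀ a : Fin k,
      PartArc P (f ⟨a.1, by have := a.isLt; omega⟩)
        (f ⟨2 * k - 1 - (τ a).1, by have := (τ a).isLt; omega⟩)

def PartAvoids {k n : ℕ} (τ : Equiv.Perm (Fin k)) (P : Finpartition (Finset.Icc 1 n)) : Prop :=
  ¬ PartContains τ P

/-! ### Counting functions -/

/-- `|M_n(τ)|`: the number of `τ`-avoiding perfect matchings of `[2n]`. -/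
noncomputable def mcount {k : ℕ} (τ : Equiv.Perm (Fin k)) (n : ℕ) : ℕ :=
  {M : Finset (ℕ × ℕ) | IsPerfectMatching n M ∧ MatchAvoids τ M}.ncard

/-- `|M_n(σ,τ)|`: the number of perfect matchings of `[2n]` avoiding both `σ` and `τ`. -/
noncomputable def mcount2 {k : ℕ} (σ τ : Equiv.Perm (Fin k)) (n : ℕ) : ℕ :=
  {M : Finset (ℕ × ℕ) | IsPerfectMatching n M ∧ MatchAvoids σ M ∧ MatchAvoids τ M}.ncard

/-- `|P_n(τ)|`: the number of `τ`-avoiding set partitions of `[n]`. -/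
noncomputable def pcount {k : ℕ} (τ : Equiv.Perm (Fin k)) (n : ℕ) : ℕ :=
  Nat.card {P : Finpartition (Finset.Icc 1 n) // PartAvoids τ P}

/-- `|P_n(σ,τ)|`: the number of set partitions of `[n]` avoiding both `σ` and `τ`. -/
noncomputable def pcount2 {k : ℕ} (σ τ : Equiv.Perm (Fin k)) (n : ℕ) : ℕ :=
  Nat.card {P : Finpartition (Finset.Icc 1 n) // PartAvoids σ P ∧ PartAvoids τ P}

/-- `|S_n(τ)|`: the number of `τ`-avoiding permutations of `[n]`. -/
noncomputable def scount {k : ℕ} (τ : Equiv.Perm (Fin k)) (n : ℕ) : ℕ :=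
  Nat.card {π : Equiv.Perm (Fin n) // PermAvoids τ π}


def cA (t : List Bool) (i : ℕ) : ℕ := (t.take i).count true
def cS (t : List Bool) (i : ℕ) : ℕ := (t.take i).count false

lemma cA_succ_true {t : List Bool} {i : ℕ} (h : t[i]? = some true) :
    cA t (i+1) = cA t i + 1 ∧ cS t (i+1) = cS t i := by
  simp [cA, cS, List.take_add_one, h]

lemma cA_succ_false {t : List Bool} {i : ℕ} (h : t[i]? = some false) :
    cA t (i+1) = cA t i ∧ cS t (i+1) = cS t i + 1 := by
  simp [cA, cS, List.take_add_one, h]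

lemma cAS_mono (t : List Bool) {i j : ℕ} (h : i ≤ j) : cA t i ≤ cA t j ∧ cS t i ≤ cS t j :=
  ⟨(List.take_sublist_take_left h).count_le _, (List.take_sublist_take_left h).count_le _⟩

lemma cA_add_cS (t : List Bool) (i : ℕ) : cA t i + cS t i = min i t.length := by
  simp only [cA, cS]
  rw [List.count_true_add_count_false, List.length_take]

lemma get_cases {t : List Bool} {i : ℕ} (h : i < t.length) :
    t[i]? = some true ∨ t[i]? = some false := by
  rw [List.getElem?_eq_getElem h]
  cases t[i] <;> simp

/-- the step producing the `c`-th column -/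
lemma exists_step (t : List Bool) (c : ℕ) (hc : 1 ≤ c) (i : ℕ) (hi : c ≤ cA t i) :
    ∃ j, j < i ∧ t[j]? = some true ∧ cA t j + 1 = c := by
  induction i with
  | zero => simp [cA] at hi; omega
  | succ i ih =>
    by_cases h : c ≤ cA t i
    · obtain ⟨j, hj, h'⟩ := ih h
      exact ⟨j, by omega, h'⟩
    · by_cases hl : i < t.length
      · rcases get_cases hl with h1 | h1
        · have := cA_succ_true h1
          exact ⟨i, by omega, h1, by omega⟩
        · have := cA_succ_false h1
          omega
      · have h1 := cA_add_cS t i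
        have h2 := cA_add_cS t (i+1)
        have h3 := cAS_mono t (Nat.le_succ i)
        simp only [Nat.succ_eq_add_one] at h3
        omega

/-- downward closure of `R` -/
def Below (R : Finset (ℕ × ℕ)) (c r : ℕ) : Prop := ∃ p ∈ R, c ≤ p.1 ∧ r ≤ p.2

/-- greedy property -/
def Greedy (n : ℕ) (t : List Bool) (R : Finset (ℕ × ℕ)) : Prop :=
  t.length = 2 * n ∧ ∀ i < 2 * n, (t[i]? = some true ↔ Below R (cA t i + 1) (n - cS t i))

lemma greedy_unique {n : ℕ} {t t' : List Bool} {R : Finset (ℕ × ℕ)}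
    (h : Greedy n t R) (h' : Greedy n t' R) : t = t' := by
  have key : ∀ i, t.take i = t'.take i := by
    intro i
    induction i with
    | zero => simp
    | succ i ih =>
      rw [List.take_add_one, List.take_add_one, ih]
      by_cases hi : i < 2 * n
      · have h1 := h.2 i hi
        have h2 := h'.2 i hi
        have e1 : cA t i = cA t' i := by simp [cA, ih]
        have e2 : cS t i = cS t' i := by simp [cS, ih]
        rw [e1, e2, ← h2] at h1
        rcases get_cases (t := t) (i := i) (by have := h.1; omega) with h3 | h3 <;>
        rcases get_cases (t := t') (i := i) (by have := h'.1; omega) with h4 | h4 <;>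
          simp_all
      · rw [List.getElem?_eq_none (by have := h.1; omega),
          List.getElem?_eq_none (by have := h'.1; omega)]
  have := key (2 * n)
  rwa [List.take_of_length_le h.1.le, List.take_of_length_le h'.1.le] at this

open Classical in
noncomputable def gpath (n : ℕ) (R : Finset (ℕ × ℕ)) : ℕ → List Bool
  | 0 => []
  | i+1 => gpath n R i ++
      [decide (Below R ((gpath n R i).count true + 1) (n - (gpath n R i).count false))]

lemma gpath_length (n : ℕ) (R : Finset (ℕ × ℕ)) (i : ℕ) : (gpath n R i).length = i := by
  induction i with
  | zero => simp [gpath]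
  | succ i ih => simp [gpath, ih]

lemma gpath_take (n : ℕ) (R : Finset (ℕ × ℕ)) (i j : ℕ) :
    (gpath n R (i + j)).take i = gpath n R i := by
  induction j with
  | zero => rw [List.take_of_length_le]; rfl; simp [gpath_length]
  | succ j ih =>
    rw [← add_assoc, gpath, List.take_append_of_le_length (by simp [gpath_length]), ih]

lemma gpath_greedy (n : ℕ) (R : Finset (ℕ × ℕ)) : Greedy n (gpath n R (2 * n)) R := by
  refine ⟨gpath_length _ _ _, fun i hi => ?_⟩
  have h1 : (gpath n R (2 * n)).take i = gpath n R i := by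
    have := gpath_take n R i (2 * n - i)
    rwa [Nat.add_sub_cancel' hi.le] at this
  have h2 : (gpath n R (2 * n)).take (i+1) = gpath n R (i+1) := by
    have := gpath_take n R (i+1) (2 * n - (i+1))
    rwa [Nat.add_sub_cancel' hi] at this
  have h3 : (gpath n R (2 * n))[i]? = (gpath n R (i+1))[i]? := by
    rw [← h2, List.getElem?_take_of_lt (by omega)]
  rw [h3, gpath, List.getElem?_append_right (by simp [gpath_length])]
  simp [gpath_length, cA, cS, h1]

lemma dyck_ends {n : ℕ} {t : List Bool} (hd : IsDyckPath n t) {i : ℕ} (hi : 2 * n ≤ i) :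
    cA t i = n ∧ cS t i = n := by
  have h1 := cA_add_cS t i
  have h2 : cA t i = n := by
    simp only [cA]; rw [List.take_of_length_le (by have := hd.1; omega)]; exact hd.2.1
  have := hd.1
  omega

/-- minimal placements are greedy -/
lemma minimal_greedy {n : ℕ} {t : List Bool} {R : Finset (ℕ × ℕ)} (hd : IsDyckPath n t)
    (hR : IsFullRookPlacement n t R) (hm : BoardMinimal n t R) : Greedy n t R := by
  have hl := hd.1
  refine ⟨hl, fun i hi => ⟨fun h => ?_, fun h => ?_⟩⟩
  · have key : ∀ k i, i + k = 2 * n → t[i]? = some true →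
        Below R (cA t i + 1) (n - cS t i) := by
      intro k
      induction k with
      | zero =>
        intro i hi h
        rw [List.getElem?_eq_none (by omega)] at h
        cases h
      | succ k ih =>
        intro i hi h
        have hs := cA_succ_true h
        by_cases hk : i + 1 < t.length
        · rcases get_cases hk with h1 | h1
          · obtain ⟨p, hp, hp1, hp2⟩ := ih (i+1) (by omega) h1
            exact ⟨p, hp, by omega, by omega⟩
          · have := hm i h h1
            refine ⟨_, this, ?_, ?_⟩
            · exact hs.1.ge
            · have := hs.2
              simp only [cS] at this ⊢
              omega
        · have h1 := dyck_ends hd (i := i + 1) (by omega)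
          have h2 : cS t i ≤ cA t i := hd.2.2 i
          omega
    exact key (2 * n - i) i (by omega) h
  · rcases get_cases (t := t) (i := i) (by omega) with h1 | h1
    · exact h1
    · exfalso
      obtain ⟨p, hp, hp1, hp2⟩ := h
      obtain ⟨-, -, j, hj1, hj2⟩ := hR.1 p hp
      change p.1 ≤ cA t j at hj1
      change cS t j + p.2 ≤ n at hj2
      have hs := cA_succ_false h1
      have : i < j := by
        by_contra hc
        have := cAS_mono t (not_lt.mp hc)
        omega
      have := cAS_mono t (show i + 1 ≤ j from this)
      omega

lemma mem_pp {n : ℕ} {π : Equiv.Perm (Fin n)} {p : ℕ × ℕ} :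
    p ∈ permPlacement π ↔ ∃ i : Fin n, p = ((i : ℕ) + 1, (π i : ℕ) + 1) := by
  simp [permPlacement, eq_comm]

lemma pigeon {n : ℕ} (π : Equiv.Perm (Fin n)) (a : ℕ) (ha : a < n) :
    Below (permPlacement π) (a + 1) (n - a) := by
  by_contra hc
  have h : ∀ i : Fin n, a ≤ i → (π i : ℕ) < n - a - 1 := by
    intro i hi
    by_contra h
    exact hc ⟨_, mem_pp.2 ⟨i, rfl⟩, by simpa using hi, by simp; omega⟩
  have h2 : (Finset.Ici (⟨a, ha⟩ : Fin n)).card ≤ (Finset.Iio (⟨n - a - 1, by omega⟩ : Fin n)).card := by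
    refine Finset.card_le_card_of_injOn π ?_ π.injective.injOn
    intro i hi
    simp only [Finset.coe_Ici, Set.mem_Ici, Finset.coe_Iio, Set.mem_Iio, Fin.le_def, Fin.lt_def] at hi ⊢
    exact h i hi
  rw [Fin.card_Ici, Fin.card_Iio] at h2
  simp at h2
  omega

lemma greedy_inv {n : ℕ} {t : List Bool} {R : Finset (ℕ × ℕ)} (hg : Greedy n t R)
    (hn : ∀ p ∈ R, p.2 ≤ n) (i : ℕ) (hi : i ≤ 2 * n) :
    ∀ p ∈ R, p.1 ≤ cA t i ∨ cS t i + p.2 ≤ n := by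
  induction i with
  | zero => intro p hp; right; simpa [cS] using hn p hp
  | succ i ih =>
    intro p hp
    have h0 := ih (by omega) p hp
    rcases get_cases (t := t) (i := i) (by have := hg.1; omega) with h1 | h1
    · have := cA_succ_true h1
      omega
    · have := cA_succ_false h1
      have h2 := (hg.2 i (by omega)).not.1 (by simp [h1])
      by_contra hc
      exact h2 ⟨p, hp, by omega, by omega⟩

lemma greedy_dyck {n : ℕ} {t : List Bool} {π : Equiv.Perm (Fin n)}
    (hg : Greedy n t (permPlacement π)) : IsDyckPath n t := by
  have hl := hg.1
  have key : ∀ i ≤ 2 * n, cS t i ≤ cA t i ∧ cA t i ≤ n := by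
    intro i
    induction i with
    | zero => simp [cS, cA]
    | succ i ih =>
      intro hi
      have h0 := ih (by omega)
      have hsum := cA_add_cS t i
      rcases get_cases (t := t) (i := i) (by omega) with h1 | h1
      · have := cA_succ_true h1
        obtain ⟨p, hp, hp1, -⟩ := (hg.2 i (by omega)).1 h1
        obtain ⟨j, rfl⟩ := mem_pp.1 hp
        have := j.isLt
        simp only at hp1
        omega
      · have := cA_succ_false h1
        have h2 := (hg.2 i (by omega)).not.1 (by simp [h1])
        have : cS t i ≠ cA t i := by
          intro he
          rw [he] at h2
          exact h2 (pigeon π _ (by omega))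
        omega
  have h2 := key (2 * n) le_rfl
  have h3 := cA_add_cS t (2 * n)
  have hsat : ∀ i, 2 * n ≤ i → t.take i = t.take (2 * n) := by
    intro i hi
    rw [List.take_of_length_le (by omega), List.take_of_length_le (by omega)]
  refine ⟨hl, ?_, fun i => ?_⟩
  · have : cA t (2 * n) = n := by omega
    rwa [cA, List.take_of_length_le hl.le] at this
  · by_cases hi : i ≤ 2 * n
    · exact (key i hi).1
    · rw [hsat i (by omega)]; exact h2.1

lemma pp_le {n : ℕ} {π : Equiv.Perm (Fin n)} (p : ℕ × ℕ) (hp : p ∈ permPlacement π) :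
    1 ≤ p.1 ∧ p.1 ≤ n ∧ 1 ≤ p.2 ∧ p.2 ≤ n := by
  obtain ⟨j, rfl⟩ := mem_pp.1 hp
  have := j.isLt
  have := (π j).isLt
  simp only
  omega

lemma greedy_full {n : ℕ} {t : List Bool} {π : Equiv.Perm (Fin n)}
    (hg : Greedy n t (permPlacement π)) : IsFullRookPlacement n t (permPlacement π) := by
  have hd := greedy_dyck hg
  refine ⟨fun p hp => ?_, fun c h1 h2 => ?_, fun r h1 h2 => ?_⟩
  · have hb := pp_le p hp
    have he := dyck_ends hd (le_refl (2 * n))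
    obtain ⟨j, hj, ht, hc⟩ := exists_step t p.1 hb.1 (2 * n) (by omega)
    have hi := greedy_inv hg (fun p hp => (pp_le p hp).2.2.2) j hj.le p hp
    have hs := cA_succ_true ht
    refine ⟨hb.1, hb.2.2.1, j + 1, ?_, ?_⟩
    · change p.1 ≤ cA t (j+1); omega
    · change cS t (j+1) + p.2 ≤ n; omega
  · refine ⟨(c, (π ⟨c - 1, by omega⟩ : ℕ) + 1), ⟨mem_pp.2 ⟨⟨c - 1, by omega⟩, ?_⟩, rfl⟩, ?_⟩
    · simp; omega
    · rintro p ⟨hp, rfl⟩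
      obtain ⟨j, rfl⟩ := mem_pp.1 hp
      simp
  · refine ⟨((π.symm ⟨r - 1, by omega⟩ : ℕ) + 1, r),
      ⟨mem_pp.2 ⟨π.symm ⟨r - 1, by omega⟩, ?_⟩, rfl⟩, ?_⟩
    · simp; omega
    · rintro p ⟨hp, rfl⟩
      obtain ⟨j, rfl⟩ := mem_pp.1 hp
      simp

lemma greedy_minimal {n : ℕ} {t : List Bool} {π : Equiv.Perm (Fin n)}
    (hg : Greedy n t (permPlacement π)) : BoardMinimal n t (permPlacement π) := by
  intro i h1 h2
  have hl := hg.1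
  obtain ⟨hi, -⟩ := List.getElem?_eq_some_iff.1 h2
  have hs := cA_succ_true h1
  obtain ⟨p, hp, hp1, hp2⟩ := (hg.2 i (by omega)).1 h1
  have h3 := (hg.2 (i+1) (by omega)).not.1 (by simp [h2])
  have h4 := greedy_inv hg (fun p hp => (pp_le p hp).2.2.2) i (by omega) p hp
  change (cA t (i+1), n - cS t (i+1)) ∈ _
  have h5 : p.1 < cA t (i+1) + 1 := by
    by_contra hc
    exact h3 ⟨p, hp, by omega, by omega⟩
  convert hp using 1
  ext
  · simp only; omega
  · simp only; omega

/-- rectangles lie below rooks -/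
lemma rect_below {n : ℕ} {t : List Bool} {R : Finset (ℕ × ℕ)} (hg : Greedy n t R)
    {i c r : ℕ} (hc : 1 ≤ c) (h1 : c ≤ cA t i) (h2 : r + cS t i ≤ n) : Below R c r := by
  obtain ⟨j, hj, ht, hc'⟩ := exists_step t c hc i h1
  obtain ⟨hjl, -⟩ := List.getElem?_eq_some_iff.1 ht
  have hl := hg.1
  obtain ⟨p, hp, hp1, hp2⟩ := (hg.2 j (by omega)).1 ht
  have := cAS_mono t hj.le
  exact ⟨p, hp, by omega, by omega⟩

lemma contains_iff {n : ℕ} {t : List Bool} {π : Equiv.Perm (Fin n)}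
    (hg : Greedy n t (permPlacement π)) :
    PlacementContains p132 n t (permPlacement π) ↔ PermContains p1324 π := by
  constructor
  · rintro ⟨i, hi, f, hf, hx, hy⟩
    obtain ⟨a, ha⟩ := mem_pp.1 (hf 0).1
    obtain ⟨b, hb⟩ := mem_pp.1 (hf 1).1
    obtain ⟨c, hc⟩ := mem_pp.1 (hf 2).1
    have x1 := hx 0 1 (by decide)
    have x2 := hx 1 2 (by decide)
    have y1 := hy 0 2 (by decide)
    have y2 := hy 2 1 (by decide)
    obtain ⟨p, hp, hp1, hp2⟩ := rect_below hg (i := i) (c := (f 2).1) (r := (f 1).2)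
      (by rw [hc]; simp) (hf 2).2.1 (hf 1).2.2
    obtain ⟨d, rfl⟩ := mem_pp.1 hp
    rw [ha, hb] at x1
    rw [hb, hc] at x2
    rw [ha, hc] at y1
    rw [hb, hc] at y2
    rw [hc] at hp1
    rw [hb] at hp2
    simp only at x1 x2 y1 y2 hp1 hp2
    have hcd : c ≠ d := by rintro rfl; omega
    have hbd : π b ≠ π d := by
      intro h
      have := π.injective h
      subst this
      omega
    have hcd' : (c : ℕ) ≠ d := fun h => hcd (Fin.ext h)
    have hbd' : (π b : ℕ) ≠ π d := fun h => hbd (Fin.ext h)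
    refine ⟨![a, b, c, d], ?_, ?_⟩
    · rw [Fin.strictMono_iff_lt_succ]
      intro k
      fin_cases k <;> simp <;> omega
    · intro k l
      fin_cases k <;> fin_cases l <;> simp [p1324] <;> omega
  · rintro ⟨f, hf, hy⟩
    have hd := greedy_dyck hg
    have hR := greedy_full hg
    have x1 := hf (show (0 : Fin 4) < 1 by decide)
    have x2 := hf (show (1 : Fin 4) < 2 by decide)
    have x3 := hf (show (2 : Fin 4) < 3 by decide)
    have y1 := hy 0 2 (by decide)
    have y2 := hy 2 1 (by decide)
    have y3 := hy 1 3 (by decide)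
    obtain ⟨-, -, i, h1, h2⟩ := hR.1 _ (mem_pp.2 ⟨f 3, rfl⟩)
    have hex : ∃ i ≤ 2 * n, (f 3 : ℕ) + 1 ≤ (t.take i).count true ∧
        (t.take i).count false + ((π (f 3) : ℕ) + 1) ≤ n := by
      by_cases hi : i ≤ 2 * n
      · exact ⟨i, hi, h1, h2⟩
      · refine ⟨2 * n, le_rfl, ?_⟩
        have hl := hd.1
        rw [List.take_of_length_le (by omega)] at h1 h2 ⊢
        exact ⟨h1, h2⟩
    obtain ⟨i, hi, h1, h2⟩ := hex
    simp only [Fin.lt_def] at x1 x2 x3 y1 y2 y3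
    refine ⟨i, hi, fun k => ((f k.castSucc : ℕ) + 1, (π (f k.castSucc) : ℕ) + 1), ?_, ?_, ?_⟩
    · intro k
      refine ⟨mem_pp.2 ⟨_, rfl⟩, ?_⟩
      fin_cases k <;> simp <;> omega
    · intro k l hkl
      have := hf (show k.castSucc < l.castSucc from hkl)
      simpa using this
    · intro k l
      fin_cases k <;> fin_cases l <;> simp [p132] <;> omega

lemma exists_perm {n : ℕ} {t : List Bool} {R : Finset (ℕ × ℕ)} (hd : IsDyckPath n t)
    (hR : IsFullRookPlacement n t R) : ∃ π : Equiv.Perm (Fin n), R = permPlacement π := by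
  have hb : ∀ p ∈ R, 1 ≤ p.1 ∧ p.1 ≤ n ∧ 1 ≤ p.2 ∧ p.2 ≤ n := by
    intro p hp
    obtain ⟨h1, h2, i, h3, h4⟩ := hR.1 p hp
    have h5 : (t.take i).count true ≤ t.count true := (List.take_sublist i t).count_le _
    have := hd.2.1
    omega
  have hex : ∀ i : Fin n, ∃ r : Fin n, ((i : ℕ) + 1, (r : ℕ) + 1) ∈ R := by
    intro i
    obtain ⟨p, ⟨hp, hp1⟩, -⟩ := hR.2.1 (i + 1) (by omega) (by omega)
    have := hb p hp
    refine ⟨⟨p.2 - 1, by omega⟩, ?_⟩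
    convert hp using 1
    ext
    · simp only; omega
    · simp only; omega
  choose f hf using hex
  have hinj : Function.Injective f := by
    intro i j hij
    have h1 := hf i
    have h2 := hf j
    rw [← hij] at h2
    have := (hR.2.2 (f i + 1) (by omega) (by omega)).unique ⟨h1, rfl⟩ ⟨h2, rfl⟩
    simp only [Prod.mk.injEq] at this
    exact Fin.ext (by omega)
  refine ⟨Equiv.ofBijective f (Finite.injective_iff_bijective.1 hinj), ?_⟩
  ext p
  rw [mem_pp]
  constructor
  · intro hp
    have hpb := hb p hp
    refine ⟨⟨p.1 - 1, by omega⟩, ?_⟩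
    have h1 := hf ⟨p.1 - 1, by omega⟩
    exact (hR.2.1 p.1 hpb.1 hpb.2.1).unique ⟨hp, rfl⟩ ⟨h1, by simp only; omega⟩
  · rintro ⟨i, rfl⟩
    exact hf i

lemma pp_injective (n : ℕ) : Function.Injective (permPlacement (n := n)) := by
  intro π ρ h
  ext i
  have : ((i : ℕ) + 1, (π i : ℕ) + 1) ∈ permPlacement ρ := by
    rw [← h]; exact mem_pp.2 ⟨i, rfl⟩
  obtain ⟨j, hj⟩ := mem_pp.1 this
  simp only [Prod.mk.injEq] at hj
  have : i = j := Fin.ext (by omega)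
  subst this
  omega

/-- The number of board-minimal `132`-avoiding full rook placements on
boards of `F_n` equals the number of `1324`-avoiding permutations of `[n]`. -/
theorem minimal_placements_132_eq_perms_1324 (n : ℕ) :
    (MinPlacements n p132).ncard = scount p1324 n := by
  have himg : MinPlacements n p132 =
      (fun π : Equiv.Perm (Fin n) => (gpath n (permPlacement π) (2 * n), permPlacement π)) ''
        {π | PermAvoids p1324 π} := by
    ext ⟨t, R⟩
    constructor
    · rintro ⟨hd, hR, hm, ha⟩
      simp only at hd hR hm ha
      obtain ⟨π, rfl⟩ := exists_perm hd hR
      have hg := minimal_greedy hd hR hm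
      refine ⟨π, ?_, ?_⟩
      · exact fun h => ha ((contains_iff hg).2 h)
      · simp only [Prod.mk.injEq, and_true]
        exact greedy_unique (gpath_greedy _ _) hg
    · rintro ⟨π, ha, he⟩
      simp only [Prod.mk.injEq] at he
      obtain ⟨rfl, rfl⟩ := he
      have hg := gpath_greedy n (permPlacement π)
      exact ⟨greedy_dyck hg, greedy_full hg, greedy_minimal hg,
        fun h => ha ((contains_iff hg).1 h)⟩
  rw [himg, Set.ncard_image_of_injective]
  · rfl
  · intro π ρ h
    exact pp_injective n (Prod.mk.inj h).2
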